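/- arXiv:0808.1095 — 2 statements merged into one kernel-verified Lean document; each statement's English description precedes it below -/
import Mathlib

section
/- If R₀ is an integral domain which is not a Bezout domain, then SL₂(R₀[t,t⁻¹]) ≠ E₂(R₀[t,t⁻¹]), where R₀[t,t⁻¹] is the ring of Laurent polynomials in one variable over R₀. -/
/-!
Write `A = R₀[t,t⁻¹]`. Inside `SL₂(A)` consider `G₁ = SL₂(R₀[t])` and its conjugate `G₂` by
`diag(t, 1)`, the stabilizers of two adjacent vertices of the Bruhat-Tits tree of the `t`-adic
valuation. Every elementary matrix over `A` lies in `⟨G₁, G₂⟩`: conjugation by `diag(t, t⁻¹)`,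
itself a product of elements of `G₁` and `G₂`, raises or lowers the exponents of `t`.

An element of `⟨G₁, G₂⟩` lies in `G₁ ∩ G₂` or is a reduced alternating word
(`mem_inf_or_reducedWord`), and the `t`-adic leading coefficient of a reduced word is controlled
by its first letter (`leading_of_reducedWord`): for a word starting in `G₂` there is a genuine pole
and the bottom row of the leading coefficient vanishes. So if `x ∈ ⟨G₁, G₂⟩` has a pole, then
the columns of its leading coefficient are proportional to the first column of a matrix of
`SL₂(R₀)`, a unimodular vector.

If `(a, b)` is not a principal ideal, the matrix `1 + t⁻¹ (a, b)ᵀ (-b, a)` has determinant `1`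
and its leading coefficient has column space spanned by `(a, b)`. This vector is not proportional
to a unimodular one, as otherwise `(a, b)` would be principal. So the matrix is not in
`⟨G₁, G₂⟩ ⊇ E₂(A)`.
-/

open Matrix Pointwise

noncomputable section

/-- `SL₂` over a commutative ring. -/
abbrev SL2 (A : Type*) [CommRing A] := Matrix.SpecialLinearGroup (Fin 2) A

/-- The elementary matrix `E₁₂(r) = [[1, r], [0, 1]]`. -/
def E12 {A : Type*} [CommRing A] (r : A) : SL2 A :=
  ⟨!![1, r; 0, 1], by simp [Matrix.det_fin_two_of]⟩

/-- The elementary matrix `E₂₁(r) = [[1, 0], [r, 1]]`. -/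
def E21 {A : Type*} [CommRing A] (r : A) : SL2 A :=
  ⟨!![1, 0; r, 1], by simp [Matrix.det_fin_two_of]⟩

/-- `SL₂(S)` identified with the subgroup of `SL₂(F)` of matrices with entries in the
subring `S` of the field `F` (the image of `SL₂(S) → SL₂(F)`). -/
def SL2In {F : Type*} [Field F] (S : Subring F) : Subgroup (SL2 F) :=
  (Matrix.SpecialLinearGroup.map S.subtype).range

/-- `E₂(S)`: the subgroup of `SL₂(F)` generated by the elementary matrices with
entry in the subring `S`. -/
def E2 {F : Type*} [Field F] (S : Subring F) : Subgroup (SL2 F) :=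
  Subgroup.closure {g | ∃ r ∈ S, g = E12 r ∨ g = E21 r}

/-- The set `D(1/π,1)·Γ·D(π,1)` of conjugates inside `SL₂(F)`. -/
def conjSet {F : Type*} [Field F] (π : F) (Γ : Subgroup (SL2 F)) : Set (SL2 F) :=
  {g | ∃ h ∈ Γ, (g : Matrix (Fin 2) (Fin 2) F) =
    !![π⁻¹, 0; 0, 1] * (h : Matrix (Fin 2) (Fin 2) F) * !![π, 0; 0, 1]}

/-- `E₂(A)` for a commutative ring `A`: the subgroup of `SL₂(A)` generated by the
elementary matrices. -/
def E2Ring (A : Type*) [CommRing A] : Subgroup (SL2 A) :=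
  Subgroup.closure {g | ∃ r : A, g = E12 r ∨ g = E21 r}

open Polynomial
open LaurentPolynomial hiding C

/-! ### Reduced words in a group generated by two subgroups -/

/-- `ReducedWord H i x`: the element `x` is a nonempty product of letters taken alternately from
`H true` and `H false`, none of them in both subgroups, the first letter being in `H i`. -/
inductive ReducedWord {G : Type*} [Group G] (H : Bool → Subgroup G) : Bool → G → Prop
  | single (i : Bool) (g : G) : g ∈ H i → g ∉ H (!i) → ReducedWord H i g
  | cons (i : Bool) (g y : G) : g ∈ H i → g ∉ H (!i) → ReducedWord H (!i) y →
      ReducedWord H i (g * y)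

lemma ReducedWord.mul_left {G : Type*} [Group G] {H : Bool → Subgroup G} {i : Bool} {g x : G}
    (hg : g ∈ H i) (hx : (∀ j, x ∈ H j) ∨ ∃ j, ReducedWord H j x) :
    (∀ j, g * x ∈ H j) ∨ ∃ j, ReducedWord H j (g * x) := by
  have both : ∀ z : G, z ∈ H i → z ∈ H (!i) → ∀ j, z ∈ H j := by
    intro z h1 h2 j
    rcases Bool.eq_or_eq_not j i with rfl | rfl
    · exact h1
    · exact h2
  rcases hx with hx | ⟨j, hx⟩
  · have hgx : g * x ∈ H i := mul_mem hg (hx i)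
    by_cases hn : g * x ∈ H (!i)
    · exact Or.inl (both _ hgx hn)
    · exact Or.inr ⟨i, .single i _ hgx hn⟩
  · rcases Bool.eq_or_eq_not j i with rfl | rfl
    · cases hx with
      | single _ _ h1 h2 =>
        have hgx : g * x ∈ H j := mul_mem hg h1
        by_cases hn : g * x ∈ H (!j)
        · exact Or.inl (both _ hgx hn)
        · exact Or.inr ⟨j, .single j _ hgx hn⟩
      | cons _ k y h1 h2 hy =>
        have hgk : g * k ∈ H j := mul_mem hg h1
        rw [← mul_assoc]
        by_cases hn : g * k ∈ H (!j)
        · -- the first two letters merge into an element of the intersection, absorbed by `y`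
          right
          refine ⟨!j, ?_⟩
          cases hy with
          | single _ _ h3 h4 =>
            refine .single _ _ (mul_mem hn h3) ?_
            rw [Bool.not_not] at h4 ⊢
            rwa [Subgroup.mul_mem_cancel_left _ hgk]
          | cons _ l z h3 h4 hz =>
            rw [← mul_assoc]
            refine .cons _ _ _ (mul_mem hn h3) ?_ hz
            rw [Bool.not_not] at h4 ⊢
            rwa [Subgroup.mul_mem_cancel_left _ hgk]
        · exact Or.inr ⟨j, .cons j _ y hgk hn hy⟩
    · by_cases hn : g ∈ H (!i)
      · right
        refine ⟨!i, ?_⟩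
        cases hx with
        | single _ _ h3 h4 =>
          refine .single _ _ (mul_mem hn h3) ?_
          rw [Bool.not_not] at h4 ⊢
          rwa [Subgroup.mul_mem_cancel_left _ hg]
        | cons _ l z h3 h4 hz =>
          rw [← mul_assoc]
          refine .cons _ _ _ (mul_mem hn h3) ?_ hz
          rw [Bool.not_not] at h4 ⊢
          rwa [Subgroup.mul_mem_cancel_left _ hg]
      · exact Or.inr ⟨i, .cons i _ x hg hn hx⟩

lemma mem_inf_or_reducedWord {G : Type*} [Group G] (H : Bool → Subgroup G) {x : G}
    (hx : x ∈ ⨆ i, H i) : (∀ j, x ∈ H j) ∨ ∃ j, ReducedWord H j x := by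
  rw [Subgroup.iSup_eq_closure] at hx
  induction hx using Subgroup.closure_induction_left with
  | one => exact Or.inl fun j => one_mem _
  | mul_left g hg y _ ih =>
    obtain ⟨i, hi⟩ := Set.mem_iUnion.1 hg
    exact ReducedWord.mul_left hi ih
  | inv_mul_cancel g hg y _ ih =>
    obtain ⟨i, hi⟩ := Set.mem_iUnion.1 hg
    exact ReducedWord.mul_left (inv_mem hi) ih

/-! ### The two vertex stabilizers -/

section

variable {R : Type*} [CommRing R]

/-- The subgroup `SL₂(R[t])` of `SL₂(R[t,t⁻¹])`, given by its entries. -/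
def polySubgroup (R : Type*) [CommRing R] : Subgroup (SL2 (LaurentPolynomial R)) where
  carrier := {x | ∃ a b c d : R[X], x.1 = !![toLaurent a, toLaurent b; toLaurent c, toLaurent d]}
  one_mem' := ⟨1, 0, 0, 1, by simp [Matrix.one_fin_two]⟩
  mul_mem' := by
    rintro x y ⟨a, b, c, d, hx⟩ ⟨a', b', c', d', hy⟩
    refine ⟨a * a' + b * c', a * b' + b * d', c * a' + d * c', c * b' + d * d', ?_⟩
    change x.1 * y.1 = _
    rw [hx, hy, Matrix.mul_fin_two]
    simp
  inv_mem' := by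
    rintro x ⟨a, b, c, d, hx⟩
    refine ⟨d, -b, -c, a, ?_⟩
    rw [Matrix.SpecialLinearGroup.coe_inv, hx, Matrix.adjugate_fin_two_of]
    simp

/-- The conjugate `diag(t,1)⁻¹ · SL₂(R[t]) · diag(t,1)`, given by its entries. -/
def conjPolySubgroup (R : Type*) [CommRing R] : Subgroup (SL2 (LaurentPolynomial R)) where
  carrier := {x | ∃ a b c d : R[X],
    x.1 = !![toLaurent a, T (-1) * toLaurent b; T 1 * toLaurent c, toLaurent d]}
  one_mem' := ⟨1, 0, 0, 1, by simp [Matrix.one_fin_two]⟩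
  mul_mem' := by
    rintro x y ⟨a, b, c, d, hx⟩ ⟨a', b', c', d', hy⟩
    refine ⟨a * a' + b * c', a * b' + b * d', c * a' + d * c', c * b' + d * d', ?_⟩
    have hT : (T (-1) * T 1 : LaurentPolynomial R) = 1 := by rw [← T_add]; simp
    change x.1 * y.1 = _
    rw [hx, hy, Matrix.mul_fin_two]
    simp only [map_add, map_mul]
    rw [show toLaurent a * toLaurent a' + T (-1) * toLaurent b * (T 1 * toLaurent c') =
        toLaurent a * toLaurent a' + toLaurent b * toLaurent c' by
          linear_combination (toLaurent b * toLaurent c') * hT,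
      show toLaurent a * (T (-1) * toLaurent b') + T (-1) * toLaurent b * toLaurent d' =
        T (-1) * (toLaurent a * toLaurent b' + toLaurent b * toLaurent d') by ring,
      show T 1 * toLaurent c * toLaurent a' + toLaurent d * (T 1 * toLaurent c') =
        T 1 * (toLaurent c * toLaurent a' + toLaurent d * toLaurent c') by ring,
      show T 1 * toLaurent c * (T (-1) * toLaurent b') + toLaurent d * toLaurent d' =
        toLaurent c * toLaurent b' + toLaurent d * toLaurent d' by
          linear_combination (toLaurent c * toLaurent b') * hT]
  inv_mem' := by
    rintro x ⟨a, b, c, d, hx⟩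
    refine ⟨d, -b, -c, a, ?_⟩
    rw [Matrix.SpecialLinearGroup.coe_inv, hx, Matrix.adjugate_fin_two_of]
    simp

/-- The two vertex stabilizers: `SL₂(R[t])` for `true`, its conjugate for `false`. -/
def stab (R : Type*) [CommRing R] : Bool → Subgroup (SL2 (LaurentPolynomial R))
  | true => polySubgroup R
  | false => conjPolySubgroup R

lemma T_mul_T_neg (n : ℤ) : (T n * T (-n) : LaurentPolynomial R) = 1 := by
  rw [← T_add, add_neg_cancel, T_zero]

lemma T_neg_mul_T (n : ℤ) : (T (-n) * T n : LaurentPolynomial R) = 1 := by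
  rw [mul_comm, T_mul_T_neg]

/-- The matrix `diag(tⁿ, t⁻ⁿ)`. -/
def diagT (R : Type*) [CommRing R] (n : ℤ) : SL2 (LaurentPolynomial R) :=
  ⟨!![T n, 0; 0, T (-n)], by rw [Matrix.det_fin_two_of, T_mul_T_neg]; simp⟩

lemma diagT_one_mem : diagT R 1 ∈ ⨆ i, stab R i := by
  -- `diag(t, t⁻¹)` is the product of two monomial matrices, one from each subgroup
  let w₁ : SL2 (LaurentPolynomial R) := ⟨!![0, -1; 1, 0], by simp [Matrix.det_fin_two_of]⟩
  let w₂ : SL2 (LaurentPolynomial R) :=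
    ⟨!![0, T (-1); -T 1, 0], by
      rw [Matrix.det_fin_two_of, mul_neg, T_neg_mul_T]; simp⟩
  have h₁ : w₁ ∈ stab R true := ⟨0, -1, 1, 0, by simp [w₁]⟩
  have h₂ : w₂ ∈ stab R false := ⟨0, 1, -1, 0, by simp [w₂]⟩
  have h : diagT R 1 = w₁ * w₂ := by
    apply Subtype.ext
    change _ = w₁.1 * w₂.1
    simp [diagT, w₁, w₂]
  rw [h]
  exact mul_mem (Subgroup.mem_iSup_of_mem true h₁) (Subgroup.mem_iSup_of_mem false h₂)

lemma diagT_mem (n : ℕ) : diagT R n ∈ ⨆ i, stab R i := by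
  have h : diagT R n = diagT R 1 ^ n := by
    induction n with
    | zero =>
      rw [pow_zero]
      apply Subtype.ext
      simp [diagT, Matrix.one_fin_two]
    | succ n ih =>
      rw [pow_succ, ← ih]
      apply Subtype.ext
      change _ = (diagT R n).1 * (diagT R 1).1
      have h₁ : (T n * T 1 : LaurentPolynomial R) = T ((n + 1 : ℕ) : ℤ) := by
        rw [← T_add]; norm_cast
      have h₂ : (T (-n) * T (-1) : LaurentPolynomial R) = T (-((n + 1 : ℕ) : ℤ)) := by
        rw [← T_add]; congr 1; push_cast; ring
      simp only [diagT, Matrix.mul_fin_two, h₁, h₂]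
      simp
  rw [h]
  exact pow_mem diagT_one_mem n

/-- For every Laurent polynomial `r` some even shift `t²ⁿ r` is a polynomial. -/
lemma exists_even_shift (r : LaurentPolynomial R) :
    ∃ (n : ℕ) (p : R[X]), toLaurent p = T n * r * T n := by
  obtain ⟨n, p, hp⟩ := r.exists_T_pow
  refine ⟨n, X ^ n * p, ?_⟩
  rw [map_mul, hp, toLaurent_X_pow]
  ring

lemma E12_mem (r : LaurentPolynomial R) : E12 r ∈ ⨆ i, stab R i := by
  obtain ⟨n, p, hp⟩ := exists_even_shift r
  have h : diagT R n * E12 r = E12 (toLaurent p) * diagT R n := by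
    apply Subtype.ext
    change (diagT R n).1 * (E12 r).1 = (E12 (toLaurent p)).1 * (diagT R n).1
    have hT := T_mul_T_neg (R := R) n
    simp only [diagT, E12, Matrix.mul_fin_two, hp]
    rw [show T n * r * T n * T (-n) = T n * r by linear_combination (T n * r) * hT]
    simp [mul_assoc]
  rw [← Subgroup.mul_mem_cancel_left _ (diagT_mem n), h]
  refine mul_mem (Subgroup.mem_iSup_of_mem true ?_) (diagT_mem n)
  exact ⟨1, p, 0, 1, by simp [E12]⟩

lemma E21_mem (r : LaurentPolynomial R) : E21 r ∈ ⨆ i, stab R i := by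
  obtain ⟨n, p, hp⟩ := exists_even_shift r
  have h : E21 r * diagT R n = diagT R n * E21 (toLaurent p) := by
    apply Subtype.ext
    change (E21 r).1 * (diagT R n).1 = (diagT R n).1 * (E21 (toLaurent p)).1
    have hT := T_mul_T_neg (R := R) n
    simp only [diagT, E21, Matrix.mul_fin_two, hp]
    rw [show T (-n) * (T n * r * T n) = r * T n by linear_combination (r * T n) * hT]
    simp [mul_assoc]
  rw [← Subgroup.mul_mem_cancel_right _ (diagT_mem n), h]
  refine mul_mem (diagT_mem n) (Subgroup.mem_iSup_of_mem true ?_)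
  exact ⟨1, 0, p, 1, by simp [E21]⟩

lemma E2Ring_le : E2Ring (LaurentPolynomial R) ≤ ⨆ i, stab R i := by
  refine (Subgroup.closure_le _).2 ?_
  rintro g ⟨r, rfl | rfl⟩
  · exact E12_mem r
  · exact E21_mem r

/-! ### Leading coefficients of reduced words -/

lemma exists_toLaurent_eq_T_one_mul {p : R[X]} (hp : p.coeff 0 = 0) :
    ∃ q : R[X], toLaurent p = T 1 * toLaurent q := by
  obtain ⟨q, rfl⟩ := X_dvd_iff.2 hp
  exact ⟨q, by simp⟩

/-- A polynomial matrix lies in the conjugate subgroup once its lower left entry is divisible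
by `t`. -/
lemma mem_conj_of_coeff {x : SL2 (LaurentPolynomial R)} {a b c d : R[X]}
    (hx : x.1 = !![toLaurent a, toLaurent b; toLaurent c, toLaurent d]) (hc : c.coeff 0 = 0) :
    x ∈ stab R false := by
  obtain ⟨q, hq⟩ := exists_toLaurent_eq_T_one_mul hc
  refine ⟨a, X * b, q, d, ?_⟩
  rw [hx, hq, map_mul, toLaurent_X, ← mul_assoc, ← T_add]
  simp

lemma mem_poly_of_coeff {x : SL2 (LaurentPolynomial R)} {a b c d : R[X]}
    (hx : x.1 = !![toLaurent a, T (-1) * toLaurent b; T 1 * toLaurent c, toLaurent d])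
    (hb : b.coeff 0 = 0) : x ∈ stab R true := by
  obtain ⟨q, hq⟩ := exists_toLaurent_eq_T_one_mul hb
  refine ⟨a, q, X * c, d, ?_⟩
  rw [hx, hq, map_mul, toLaurent_X, ← mul_assoc, ← T_add]
  simp

/-- `Cleared x n p q r s`: the polynomial matrix `[[p, q], [r, s]]` is `tⁿ x`. -/
def Cleared (x : SL2 (LaurentPolynomial R)) (n : ℕ) (p q r s : R[X]) : Prop :=
  x.1 = !![T (-n) * toLaurent p, T (-n) * toLaurent q; T (-n) * toLaurent r, T (-n) * toLaurent s]

lemma Cleared.mul_left {x h : SL2 (LaurentPolynomial R)} {n : ℕ} {p q r s a b c d : R[X]}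
    (hx : Cleared x n p q r s)
    (hh : h.1 = !![toLaurent a, toLaurent b; toLaurent c, toLaurent d]) :
    Cleared (h * x) n (a * p + b * r) (a * q + b * s) (c * p + d * r) (c * q + d * s) := by
  change h.1 * x.1 = _
  rw [hx, hh, Matrix.mul_fin_two]
  simp only [map_add, map_mul, mul_add, mul_left_comm]

lemma Cleared.conj_mul_left {x h : SL2 (LaurentPolynomial R)} {n : ℕ} {p q r s a b c d : R[X]}
    (hx : Cleared x n p q r s)
    (hh : h.1 = !![toLaurent a, T (-1) * toLaurent b; T 1 * toLaurent c, toLaurent d]) :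
    Cleared (h * x) (n + 1) (X * a * p + b * r) (X * a * q + b * s)
      (X * (X * c * p + d * r)) (X * (X * c * q + d * s)) := by
  have hT := T_neg_mul_T (R := R) 1
  have hn : (T (-((n + 1 : ℕ) : ℤ)) : LaurentPolynomial R) = T (-n) * T (-1) := by
    rw [← T_add]; push_cast; ring_nf
  change h.1 * x.1 = _
  rw [hx, hh, Matrix.mul_fin_two, hn]
  have key : ∀ {a b c d a' b' c' d' : LaurentPolynomial R}, a = a' → b = b' → c = c' → d = d' →
      !![a, b; c, d] = !![a', b'; c', d'] := by
    rintro _ _ _ _ _ _ _ _ rfl rfl rfl rfl; rfl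
  simp only [map_add, map_mul, toLaurent_X]
  apply key
  · linear_combination -(T (-n) * toLaurent a * toLaurent p) * hT
  · linear_combination -(T (-n) * toLaurent a * toLaurent q) * hT
  · linear_combination
      -(T (-n) * (T 1 * toLaurent c * toLaurent p + toLaurent d * toLaurent r)) * hT
  · linear_combination
      -(T (-n) * (T 1 * toLaurent c * toLaurent q + toLaurent d * toLaurent s)) * hT

/-- Two ways of clearing denominators, with exponents `m + k` and `k`, differ by `tᵐ`. -/
lemma Cleared.eq_X_pow_mul {x : SL2 (LaurentPolynomial R)} {m k : ℕ} {p q r s p' q' r' s' : R[X]}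
    (h : Cleared x (m + k) p q r s) (h' : Cleared x k p' q' r' s') :
    p = X ^ m * p' ∧ q = X ^ m * q' ∧ r = X ^ m * r' ∧ s = X ^ m * s' := by
  have aux : ∀ u v : R[X], T (-((m + k : ℕ) : ℤ)) * toLaurent u = T (-k) * toLaurent v →
      u = X ^ m * v := by
    intro u v huv
    apply toLaurent_injective
    rw [map_mul, toLaurent_X_pow]
    have h₁ := T_mul_T_neg (R := R) ((m + k : ℕ) : ℤ)
    have h₂ := T_mul_T_neg (R := R) k
    have h₃ : (T ((m + k : ℕ) : ℤ) : LaurentPolynomial R) = T m * T k := by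
      rw [← T_add]; norm_cast
    linear_combination T ((m + k : ℕ) : ℤ) * huv - toLaurent u * h₁ +
      T m * toLaurent v * h₂ + T (-k) * toLaurent v * h₃
  have e := h.symm.trans h'
  exact ⟨aux _ _ (by simpa using congrFun₂ e 0 0), aux _ _ (by simpa using congrFun₂ e 0 1),
    aux _ _ (by simpa using congrFun₂ e 1 0), aux _ _ (by simpa using congrFun₂ e 1 1)⟩

/-- The leading coefficient of a reduced word: if the word starts in `SL₂(R[t])`, the bottom row
is nonzero; if it starts in the conjugate subgroup, there is a pole, the top row is nonzero and
the bottom row is zero. -/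
lemma leading_of_reducedWord [IsDomain R] {i : Bool} {x : SL2 (LaurentPolynomial R)}
    (hx : ReducedWord (stab R) i x) :
    ∃ (n : ℕ) (p q r s : R[X]), Cleared x n p q r s ∧
      if i then (r.coeff 0 ≠ 0 ∨ s.coeff 0 ≠ 0)
      else (0 < n ∧ (p.coeff 0 ≠ 0 ∨ q.coeff 0 ≠ 0) ∧ r.coeff 0 = 0 ∧ s.coeff 0 = 0) := by
  have one_cleared : Cleared (1 : SL2 (LaurentPolynomial R)) 0 1 0 0 1 := by
    simp [Cleared, Matrix.one_fin_two]
  induction hx with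
  | single i g h1 h2 =>
    cases i
    · obtain ⟨a, b, c, d, hg⟩ := h1
      have hb : b.coeff 0 ≠ 0 := fun hb => h2 (mem_poly_of_coeff hg hb)
      have := one_cleared.conj_mul_left hg
      rw [mul_one] at this
      exact ⟨_, _, _, _, _, this, by simp [hb]⟩
    · obtain ⟨a, b, c, d, hg⟩ := h1
      have hc : c.coeff 0 ≠ 0 := fun hc => h2 (mem_conj_of_coeff hg hc)
      have := one_cleared.mul_left hg
      rw [mul_one] at this
      exact ⟨_, _, _, _, _, this, by simp [hc]⟩
  | cons i g y h1 h2 hy ih =>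
    cases i
    · obtain ⟨a, b, c, d, hg⟩ := h1
      have hb : b.coeff 0 ≠ 0 := fun hb => h2 (mem_poly_of_coeff hg hb)
      obtain ⟨n, p, q, r, s, hc, hl⟩ := ih
      refine ⟨_, _, _, _, _, hc.conj_mul_left hg, ?_⟩
      simpa [hb, mul_coeff_zero] using hl
    · obtain ⟨a, b, c, d, hg⟩ := h1
      have hc : c.coeff 0 ≠ 0 := fun hc => h2 (mem_conj_of_coeff hg hc)
      obtain ⟨n, p, q, r, s, hcl, hl⟩ := ih
      refine ⟨_, _, _, _, _, hcl.mul_left hg, ?_⟩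
      simp only [Bool.not_true, Bool.false_eq_true, if_false] at hl
      simpa [hc, mul_coeff_zero, hl.2.2.1, hl.2.2.2] using hl.2.1

/-- If a reduced word starting in the conjugate subgroup becomes a polynomial matrix after
multiplication by `t`, the bottom row of that matrix vanishes at `t = 0`. -/
lemma bottom_eq_zero [IsDomain R] {x : SL2 (LaurentPolynomial R)}
    (hx : ReducedWord (stab R) false x) {p q r s : R[X]} (hc : Cleared x 1 p q r s) : r.coeff 0 = 0 ∧ s.coeff 0 = 0 := by
  obtain ⟨n, p', q', r', s', hc', hl⟩ := leading_of_reducedWord hx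
  simp only [Bool.false_eq_true, if_false] at hl
  obtain ⟨hn, htop, hr, hs⟩ := hl
  obtain ⟨m, rfl⟩ : ∃ m, n = m + 1 := ⟨n - 1, by omega⟩
  obtain ⟨rfl, rfl, rfl, rfl⟩ := hc'.eq_X_pow_mul hc
  rcases Nat.eq_zero_or_pos m with rfl | hm
  · simpa using And.intro hr hs
  · simp [mul_coeff_zero, hm.ne] at htop

/-! ### A matrix outside the elementary group -/

/-- The matrix `1 + t⁻¹ (a, b)ᵀ (-b, a)`. -/
def cohnMatrix (a b : R) : SL2 (LaurentPolynomial R) :=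
  ⟨!![T (-1) * toLaurent (X - C (a * b)), T (-1) * toLaurent (C (a * a));
      T (-1) * toLaurent (-C (b * b)), T (-1) * toLaurent (X + C (a * b))], by
    have hT := T_neg_mul_T (R := R) 1
    rw [Matrix.det_fin_two_of]
    simp only [map_sub, map_add, map_neg, map_mul, toLaurent_X]
    linear_combination (T (-1) * T 1 + 1) * hT⟩

lemma cohnMatrix_cleared (a b : R) : Cleared (cohnMatrix a b) 1
    (X - C (a * b)) (C (a * a)) (-C (b * b)) (X + C (a * b)) := by
  simp only [Cleared, cohnMatrix, Nat.cast_one]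

lemma isPrincipal_of_unimodular {a b α β γ δ : R} (hdet : α * δ - β * γ = 1)
    (h : γ * a + δ * b = 0) : (Ideal.span {a, b}).IsPrincipal := by
  refine ⟨α * a + β * b, le_antisymm ?_ ?_⟩
  · rw [Ideal.span_le]
    rintro x (rfl | rfl)
    · exact Ideal.mem_span_singleton'.2 ⟨δ, by linear_combination x * hdet + β * h⟩
    · exact Ideal.mem_span_singleton'.2 ⟨-γ, by linear_combination x * hdet - α * h⟩
  · refine (Ideal.span_singleton_le_iff_mem _).2 (Ideal.mem_span_pair.2 ⟨α, β, rfl⟩)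

lemma isPrincipal_of_cohnMatrix_mem [IsDomain R] {a b : R}
    (h : cohnMatrix a b ∈ ⨆ i, stab R i) :
    (Ideal.span {a, b}).IsPrincipal := by
  have hg := cohnMatrix_cleared a b
  have hpoly : cohnMatrix a b ∈ stab R true → (Ideal.span {a, b}).IsPrincipal := by
    rintro ⟨p, q, r, s, hx⟩
    have hx' : Cleared (cohnMatrix a b) 0 p q r s := by simpa [Cleared] using hx
    obtain ⟨-, h1, h2, -⟩ := Cleared.eq_X_pow_mul (m := 1) (k := 0) hg hx'
    have ha : a = 0 := by simpa [mul_coeff_zero] using congrArg (fun f => f.coeff 0) h1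
    have hb : b = 0 := by simpa [mul_coeff_zero] using congrArg (fun f => f.coeff 0) h2
    exact isPrincipal_of_unimodular (α := 1) (β := 0) (γ := 0) (δ := 1) (by simp) (by simp [hb])
  rcases mem_inf_or_reducedWord _ h with h | ⟨i, h⟩
  · exact hpoly (h true)
  cases i with
  | false =>
    have hb : b = 0 := by simpa using (bottom_eq_zero h hg).1
    exact isPrincipal_of_unimodular (α := 1) (β := 0) (γ := 0) (δ := 1) (by simp) (by simp [hb])
  | true =>
    generalize hw : cohnMatrix a b = w at *
    cases h with
    | single _ _ h1 h2 => exact hpoly h1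
    | cons _ k y h1 h2 hy =>
      obtain ⟨α, β, γ, δ, hk⟩ := inv_mem h1
      have hdet : α * δ - β * γ = 1 := by
        apply toLaurent_injective
        have := (k⁻¹).2
        rw [hk, Matrix.det_fin_two_of] at this
        simpa using this
      have hy' := hg.mul_left hk
      rw [inv_mul_cancel_left] at hy'
      obtain ⟨e1, e2⟩ := bottom_eq_zero hy hy'
      simp [mul_coeff_zero] at e1 e2
      refine isPrincipal_of_unimodular (α := α.coeff 0) (β := β.coeff 0) (γ := γ.coeff 0)
        (δ := δ.coeff 0) ?_ ?_
      · simpa [mul_coeff_zero] using congrArg (fun f => f.coeff 0) hdet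
      · -- the bottom row is `(-b, a)` times the quantity to be shown zero
        by_cases ha : a = 0
        · by_cases hb : b = 0
          · simp [ha, hb]
          · apply mul_left_cancel₀ hb
            linear_combination -e1
        · apply mul_left_cancel₀ ha
          linear_combination e2

end

/-- If `R₀` is an integral domain which is not a Bezout domain, then
`SL₂(R₀[t,t⁻¹]) ≠ E₂(R₀[t,t⁻¹])`. -/
theorem statement4 (R₀ : Type*) [CommRing R₀] [IsDomain R₀] (h : ¬ IsBezout R₀) :
    (⊤ : Subgroup (SL2 (LaurentPolynomial R₀))) ≠ E2Ring (LaurentPolynomial R₀) := by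
  intro htop
  refine h (IsBezout.iff_span_pair_isPrincipal.2 fun a b => ?_)
  exact isPrincipal_of_cohnMatrix_mem (E2Ring_le (htop ▸ Subgroup.mem_top _))
end
end

section
/- Let R be a Dedekind domain with field of fractions F and let π be a prime element of R. Then SL₂(R[1/π]) equals the subgroup of SL₂(F) generated by SL₂(R) ∪ D(1/π,1)·SL₂(R)·D(π,1), where R[1/π] denotes the subring of F generated by R and 1/π. -/
/-!
The inclusion `⊇` holds because the generators have entries in `R[1/π]`. For `⊆`, every entry of
`g ∈ SL₂(R[1/π])` becomes integral after multiplication by some power `πⁿ`, and one descends on `n`.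

Let `r₁, r₂` be the rows of the integral matrix `πⁿ g`, where `n ≥ 1`; its determinant is `π²ⁿ`.
Since `R` is Dedekind, `R/π` is a field. If both rows vanish mod `π`, then `πⁿ⁻¹ g` is already
integral. Otherwise, after left multiplication by a Weyl element if necessary, `r₂ ≢ 0 mod π`. As
the determinant is divisible by `π²`, two applications of proportionality mod `π`
(`exists_row_sub_dvd`) give `u ∈ R` with `r₁ - u r₂ ≡ 0 mod π²` (`exists_row_sub_sq_dvd`). Then
`diag(1/π, π) · E₁₂(-u) · g` becomes integral after multiplication by `πⁿ⁻¹`, and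
`diag(1/π, π)` lies in the generated subgroup, being the product of the conjugate of one Weyl
element and another Weyl element.
-/


open Matrix Pointwise

noncomputable section

/-- Over the field `R/π`, a row `(a, b)` with `det = 0` against a nonzero row `(c, d)` is a multiple
of it. -/
lemma exists_row_sub_dvd {R : Type*} [CommRing R] [IsDedekindDomain R] {π : R} (hπ : Prime π)
    {a b c d : R} (hdet : π ∣ a * d - b * c) (hrow : ¬ (π ∣ c ∧ π ∣ d)) :
    ∃ s, π ∣ a - s * c ∧ π ∣ b - s * d := by
  have hmax : (Ideal.span {π}).IsMaximal :=
    ((Ideal.span_singleton_prime hπ.ne_zero).2 hπ).isMaximal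
      (by simpa using hπ.ne_zero)
  have inv : ∀ x, ¬ π ∣ x → ∃ y, π ∣ y * x - 1 := by
    intro x hx
    obtain ⟨y, i, hi, h⟩ := hmax.exists_inv (x := x) (by rwa [Ideal.mem_span_singleton])
    rw [Ideal.mem_span_singleton] at hi
    exact ⟨y, by rw [← h]; simpa using hi⟩
  obtain ⟨k, hk⟩ := hdet
  by_cases hc : π ∣ c
  · obtain ⟨y, m, hm⟩ := inv d (fun hd => hrow ⟨hc, hd⟩)
    refine ⟨b * y, ⟨y * k - a * m, ?_⟩, ⟨- (b * m), ?_⟩⟩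
    · linear_combination y * hk - a * hm
    · linear_combination - b * hm
  · obtain ⟨y, m, hm⟩ := inv c hc
    refine ⟨a * y, ⟨- (a * m), ?_⟩, ⟨- (y * k) - b * m, ?_⟩⟩
    · linear_combination - a * hm
    · linear_combination - y * hk - b * hm

lemma exists_row_sub_sq_dvd {R : Type*} [CommRing R] [IsDedekindDomain R] {π : R} (hπ : Prime π)
    {a b c d : R} (hdet : π ^ 2 ∣ a * d - b * c) (hrow : ¬ (π ∣ c ∧ π ∣ d)) :
    ∃ u, π ^ 2 ∣ a - u * c ∧ π ^ 2 ∣ b - u * d := by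
  obtain ⟨k, hk⟩ := hdet
  obtain ⟨s, ⟨a₁, h1⟩, ⟨b₁, h2⟩⟩ :=
    exists_row_sub_dvd hπ (a := a) (b := b) ⟨π * k, by rw [hk]; ring⟩ hrow
  have h3 : a₁ * d - b₁ * c = π * k := by
    apply mul_left_cancel₀ hπ.ne_zero
    linear_combination hk - d * h1 + c * h2
  obtain ⟨t, ⟨a₂, h4⟩, ⟨b₂, h5⟩⟩ := exists_row_sub_dvd hπ ⟨k, h3⟩ hrow
  refine ⟨s + π * t, ⟨a₂, ?_⟩, ⟨b₂, ?_⟩⟩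
  · linear_combination h1 + π * h4
  · linear_combination h2 + π * h5

lemma mem_SL2In_iff {F : Type*} [Field F] (S : Subring F) (g : SL2 F) :
    g ∈ SL2In S ↔ ∀ i j, g i j ∈ S := by
  constructor
  · rintro ⟨h, rfl⟩ i j
    simp
  · intro h
    refine ⟨⟨Matrix.of fun i j => ⟨g i j, h i j⟩, ?_⟩, ?_⟩
    · apply Subtype.ext
      have := g.det_coe
      rw [Matrix.det_fin_two] at this ⊢
      simpa using this
    · ext i j
      rfl

/-- Every element of `R[1/π]` has a power of `π` as denominator. -/
lemma exists_pow_mul_eq {R F : Type*} [CommRing R] [Field F] [Algebra R F] {π : R}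
    (hπ : algebraMap R F π ≠ 0) {x : F}
    (hx : x ∈ Subring.closure (Set.range (algebraMap R F) ∪ {(algebraMap R F π)⁻¹})) :
    ∃ (n : ℕ) (r : R), algebraMap R F r = algebraMap R F π ^ n * x := by
  induction hx using Subring.closure_induction with
  | mem x hx =>
    rcases hx with ⟨r, rfl⟩ | rfl
    · exact ⟨0, r, by simp⟩
    · exact ⟨1, 1, by simp [hπ]⟩
  | zero => exact ⟨0, 0, by simp⟩
  | one => exact ⟨0, 1, by simp⟩
  | add x y _ _ hx hy =>
    obtain ⟨n, r, h⟩ := hx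
    obtain ⟨m, s, h'⟩ := hy
    exact ⟨n + m, π ^ m * r + π ^ n * s, by simp only [map_add, map_mul, map_pow, h, h']; ring⟩
  | neg x _ hx =>
    obtain ⟨n, r, h⟩ := hx
    exact ⟨n, -r, by simp [h]⟩
  | mul x y _ _ hx hy =>
    obtain ⟨n, r, h⟩ := hx
    obtain ⟨m, s, h'⟩ := hy
    exact ⟨n + m, r * s, by simp only [map_mul, h, h']; ring⟩

/-- The diagonal matrix `diag(1/π, π)`. -/
def diagInv {F : Type*} [Field F] (π : F) (hπ : π ≠ 0) : SL2 F :=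
  ⟨!![π⁻¹, 0; 0, π], by simp [Matrix.det_fin_two_of, hπ]⟩

/-- The Weyl element `[[0, 1], [-1, 0]]`. -/
def weyl (A : Type*) [CommRing A] : SL2 A :=
  ⟨!![0, 1; -1, 0], by simp [Matrix.det_fin_two_of]⟩

lemma coe_diagInv {F : Type*} [Field F] (π : F) (hπ : π ≠ 0) :
    (diagInv π hπ : Matrix (Fin 2) (Fin 2) F) = !![π⁻¹, 0; 0, π] := rfl

lemma coe_weyl (A : Type*) [CommRing A] :
    (weyl A : Matrix (Fin 2) (Fin 2) A) = !![0, 1; -1, 0] := rfl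

lemma coe_E12 {A : Type*} [CommRing A] (r : A) :
    (E12 r : Matrix (Fin 2) (Fin 2) A) = !![1, r; 0, 1] := rfl

lemma map_weyl {A B : Type*} [CommRing A] [CommRing B] (f : A →+* B) :
    Matrix.SpecialLinearGroup.map f (weyl A) = weyl B := by
  ext i j
  fin_cases i <;> fin_cases j <;> simp [coe_weyl]

lemma map_E12 {A B : Type*} [CommRing A] [CommRing B] (f : A →+* B) (r : A) :
    Matrix.SpecialLinearGroup.map f (E12 r) = E12 (f r) := by
  ext i j
  fin_cases i <;> fin_cases j <;> simp [coe_E12]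

/-- The descent on the exponent `n` of the denominator `πⁿ`, for any subgroup `H` containing `SL₂(R)`
and `diag(1/π, π)`. -/
lemma mem_of_pow_mul_integral {R F : Type*} [CommRing R] [IsDedekindDomain R] [Field F]
    [Algebra R F] [IsFractionRing R F] {π : R} (hπ : Prime π) (hp : algebraMap R F π ≠ 0)
    (H : Subgroup (SL2 F))
    (hR : ∀ h : SL2 R, Matrix.SpecialLinearGroup.map (algebraMap R F) h ∈ H)
    (hD : diagInv (algebraMap R F π) hp ∈ H) (n : ℕ) :
    ∀ g : SL2 F, ∀ a b c d : R,
      algebraMap R F a = algebraMap R F π ^ n * g 0 0 →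
      algebraMap R F b = algebraMap R F π ^ n * g 0 1 →
      algebraMap R F c = algebraMap R F π ^ n * g 1 0 →
      algebraMap R F d = algebraMap R F π ^ n * g 1 1 → g ∈ H := by
  have hinj : Function.Injective (algebraMap R F) := IsFractionRing.injective R F
  have det_eq : ∀ (n : ℕ) (g : SL2 F) (a b c d : R),
      algebraMap R F a = algebraMap R F π ^ n * g 0 0 →
      algebraMap R F b = algebraMap R F π ^ n * g 0 1 →
      algebraMap R F c = algebraMap R F π ^ n * g 1 0 →
      algebraMap R F d = algebraMap R F π ^ n * g 1 1 → a * d - b * c = (π ^ n) ^ 2 := by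
    intro n g a b c d ha hb hc hd
    apply hinj
    have hg := g.det_coe
    rw [Matrix.det_fin_two] at hg
    simp only [map_sub, map_mul, map_pow, ha, hb, hc, hd]
    linear_combination (algebraMap R F π ^ n) ^ 2 * hg
  induction n with
  | zero =>
    intro g a b c d ha hb hc hd
    have hdet := det_eq 0 g a b c d ha hb hc hd
    obtain ⟨h, hh⟩ : ∃ h : SL2 R, (h : Matrix (Fin 2) (Fin 2) R) = !![a, b; c, d] :=
      ⟨⟨!![a, b; c, d], by rw [Matrix.det_fin_two_of, hdet]; simp⟩, rfl⟩
    have : g = Matrix.SpecialLinearGroup.map (algebraMap R F) h := by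
      ext i j
      fin_cases i <;> fin_cases j <;> simp [hh, ha, hb, hc, hd]
    rw [this]
    exact hR _
  | succ n ih =>
    have step : ∀ (g : SL2 F) (a b c d : R),
        algebraMap R F a = algebraMap R F π ^ (n + 1) * g 0 0 →
        algebraMap R F b = algebraMap R F π ^ (n + 1) * g 0 1 →
        algebraMap R F c = algebraMap R F π ^ (n + 1) * g 1 0 →
        algebraMap R F d = algebraMap R F π ^ (n + 1) * g 1 1 →
        ¬ (π ∣ c ∧ π ∣ d) → g ∈ H := by
      intro g a b c d ha hb hc hd hrow
      have hdet := det_eq (n + 1) g a b c d ha hb hc hd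
      obtain ⟨u, ⟨a', h1⟩, ⟨b', h2⟩⟩ := exists_row_sub_sq_dvd hπ (a := a) (b := b)
        ⟨(π ^ n) ^ 2, by rw [hdet]; ring⟩ hrow
      have hE : E12 (algebraMap R F (-u)) ∈ H := map_E12 (algebraMap R F) (-u) ▸ hR _
      rw [← H.mul_mem_cancel_left (H.mul_mem hD hE)]
      have h1' := congrArg (algebraMap R F) h1
      have h2' := congrArg (algebraMap R F) h2
      simp only [map_sub, map_mul, map_pow, ha, hb, hc, hd] at h1' h2'
      apply ih _ a' b' c d
      · apply mul_left_cancel₀ (pow_ne_zero 2 hp)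
        rw [← h1']
        simp [coe_diagInv, coe_E12, Matrix.mul_apply, Fin.sum_univ_two]
        field_simp
        ring
      · apply mul_left_cancel₀ (pow_ne_zero 2 hp)
        rw [← h2']
        simp [coe_diagInv, coe_E12, Matrix.mul_apply, Fin.sum_univ_two]
        field_simp
        ring
      · rw [hc]
        simp [coe_diagInv, coe_E12, Matrix.mul_apply, Fin.sum_univ_two, Algebra.smul_def]
        ring
      · rw [hd]
        simp [coe_diagInv, coe_E12, Matrix.mul_apply, Fin.sum_univ_two, Algebra.smul_def]
        ring
    intro g a b c d ha hb hc hd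
    by_cases hrow : π ∣ c ∧ π ∣ d
    · by_cases hrow' : π ∣ a ∧ π ∣ b
      · obtain ⟨⟨c', rfl⟩, ⟨d', rfl⟩⟩ := hrow
        obtain ⟨⟨a', rfl⟩, ⟨b', rfl⟩⟩ := hrow'
        rw [map_mul, pow_succ', mul_assoc] at ha hb hc hd
        exact ih g a' b' c' d' (mul_left_cancel₀ hp ha) (mul_left_cancel₀ hp hb)
          (mul_left_cancel₀ hp hc) (mul_left_cancel₀ hp hd)
      · have hW : weyl F ∈ H := map_weyl (algebraMap R F) ▸ hR _
        rw [← H.mul_mem_cancel_left hW]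
        refine step _ c d (-a) (-b) ?_ ?_ ?_ ?_ (by simpa using hrow')
        · simp [coe_weyl, Matrix.mul_apply, Fin.sum_univ_two, hc]
        · simp [coe_weyl, Matrix.mul_apply, Fin.sum_univ_two, hd]
        · simp [coe_weyl, Matrix.mul_apply, Fin.sum_univ_two, ha]
        · simp [coe_weyl, Matrix.mul_apply, Fin.sum_univ_two, hb]
    · exact step g a b c d ha hb hc hd hrow

/-- If `R` is a Dedekind domain with fraction field `F` and `π ∈ R` a
prime element, then `SL₂(R[1/π])` equals the subgroup of `SL₂(F)` generated by
`SL₂(R) ∪ D(1/π,1)·SL₂(R)·D(π,1)`. -/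
theorem statement5 (R : Type*) [CommRing R] [IsDedekindDomain R]
    (F : Type*) [Field F] [Algebra R F] [IsFractionRing R F]
    (π : R) (hπ : Prime π) :
    SL2In (Subring.closure (Set.range (algebraMap R F) ∪ {(algebraMap R F π)⁻¹})) =
      Subgroup.closure
        (↑((Matrix.SpecialLinearGroup.map (algebraMap R F)).range : Subgroup (SL2 F)) ∪
          conjSet (algebraMap R F π)
            (Matrix.SpecialLinearGroup.map (algebraMap R F)).range) := by
  have hinj : Function.Injective (algebraMap R F) := IsFractionRing.injective R F
  have hp : algebraMap R F π ≠ 0 := (map_ne_zero_iff _ hinj).2 hπ.ne_zero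
  set S := Subring.closure (Set.range (algebraMap R F) ∪ {(algebraMap R F π)⁻¹})
  have hRS : ∀ r, algebraMap R F r ∈ S := fun r => Subring.subset_closure (Or.inl ⟨r, rfl⟩)
  have hpS : (algebraMap R F π)⁻¹ ∈ S := Subring.subset_closure (Or.inr rfl)
  apply le_antisymm
  · intro g hg
    rw [mem_SL2In_iff] at hg
    set H := Subgroup.closure
        (↑((Matrix.SpecialLinearGroup.map (algebraMap R F)).range : Subgroup (SL2 F)) ∪
          conjSet (algebraMap R F π)
            (Matrix.SpecialLinearGroup.map (algebraMap R F)).range)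
    have hR : ∀ h : SL2 R, Matrix.SpecialLinearGroup.map (algebraMap R F) h ∈ H :=
      fun h => Subgroup.subset_closure (Or.inl ⟨h, rfl⟩)
    have hD : diagInv (algebraMap R F π) hp ∈ H := by
      have hW : weyl F ∈ H := map_weyl (algebraMap R F) ▸ hR _
      -- `diag(1/π, π) · weyl` is the conjugate of `weyl` by `D(1/π, 1)`.
      rw [← H.mul_mem_cancel_right hW]
      refine Subgroup.subset_closure (Or.inr ⟨weyl F, ⟨weyl R, map_weyl _⟩, ?_⟩)
      ext i j
      fin_cases i <;> fin_cases j <;> simp [coe_weyl, coe_diagInv, Matrix.mul_apply, Fin.sum_univ_two]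
    choose n r h using fun i j => exists_pow_mul_eq hp (hg i j)
    -- The sum of the four exponents serves as a common one.
    have key : ∀ i j, ∃ s, algebraMap R F s =
        algebraMap R F π ^ (n 0 0 + n 0 1 + n 1 0 + n 1 1) * g i j := by
      intro i j
      have hle : n i j ≤ n 0 0 + n 0 1 + n 1 0 + n 1 1 := by
        fin_cases i <;> fin_cases j <;> simp <;> omega
      obtain ⟨m, hm⟩ := Nat.exists_eq_add_of_le hle
      exact ⟨π ^ m * r i j, by rw [hm, map_mul, h, map_pow]; ring⟩
    choose s hs using key
    exact mem_of_pow_mul_integral hπ hp H hR hD _ g _ _ _ _ (hs 0 0) (hs 0 1) (hs 1 0) (hs 1 1)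
  · rw [Subgroup.closure_le]
    rintro g (⟨h, rfl⟩ | ⟨_, ⟨h, rfl⟩, hg⟩)
    · exact (mem_SL2In_iff _ _).2 fun i j => by simpa using hRS _
    · refine (mem_SL2In_iff _ _).2 fun i j => ?_
      rw [hg, Matrix.mul_apply]
      refine S.sum_mem fun k _ => S.mul_mem ?_ ?_
      · rw [Matrix.mul_apply]
        refine S.sum_mem fun l _ => S.mul_mem ?_ (hRS (h l k))
        fin_cases i <;> fin_cases l
        exacts [hpS, S.zero_mem, S.zero_mem, S.one_mem]
      · fin_cases k <;> fin_cases j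
        exacts [hRS π, S.zero_mem, S.zero_mem, S.one_mem]
end
end
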